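/- Let p be an odd prime, G = PSL_2(F_p), and U ⊂ G the cyclic subgroup of order p generated by the class of [[1,1],[0,1]]. For characters χ^{(p)}_i of U ≅ Z/p (sending the generator to e^{2πi·i/p}) with i, j ∈ F_p^× distinct, the induced characters satisfy Ind_U^G χ^{(p)}_i = Ind_U^G χ^{(p)}_j if and only if i and j are both squares in F_p^× or both non-squares in F_p^×. -/

import Mathlib

abbrev SL2 (p : ℕ) := Matrix.SpecialLinearGroup (Fin 2) (ZMod p)

/-- `PSL₂(𝔽ₚ)`, the quotient of `SL₂(𝔽ₚ)` by its center `{±I₂}`. -/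
abbrev PSL (p : ℕ) := SL2 p ⧸ Subgroup.center (SL2 p)

open scoped Classical in
/-- The induced character `Ind_H^G χ`, given by the Frobenius formula
`(Ind_H^G χ)(g) = |H|⁻¹ ∑_{x ∈ G} χ°(x⁻¹ g x)`, where `χ°` extends `χ` by zero. -/
noncomputable def indChar {G : Type*} [Group G] [Finite G] (H : Subgroup G) (χ : ↥H → ℂ)
    (g : G) : ℂ :=
  letI : Fintype G := Fintype.ofFinite G
  (Nat.card H : ℂ)⁻¹ * ∑ x : G, if h : x⁻¹ * g * x ∈ H then χ ⟨x⁻¹ * g * x, h⟩ else 0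

/-- The class of `[[1,1],[0,1]]` in `PSL₂(𝔽ₚ)`, a generator of `U ≅ ℤ/p`. -/
def uGen (p : ℕ) : PSL p :=
  QuotientGroup.mk' (Subgroup.center (SL2 p))
    ⟨!![1, 1; 0, 1], by rw [Matrix.det_fin_two_of]; ring⟩

open Matrix.SpecialLinearGroup
open scoped MatrixGroups

/-
The characters `χ_i` and `χ_j` are conjugate under the diagonal torus when `i / j` is a square, and
conjugate characters induce the same character. Conversely, pair the restriction of `Ind χ_k` to
`U` with `χ_i`, one `x ∈ G` at a time as in Mackey's formula. If `x` lies outside the Borel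
subgroup then `U ∩ x U x⁻¹` is trivial and the contribution does not depend on `k`; if `x` is upper
triangular with lower right entry `d`, it is `|U|` or `0` according to whether `k d² = i` or not.
For `k = i` the element `x = 1` contributes `|U|`, so for the pairing with `Ind χ_j` to be as large
there must be `d` with `j d² = i`.
-/

section InducedCharacter

variable {G : Type*} [Group G] {H : Subgroup G}

lemma extend_val_of_mem (χ : H → ℂ) {g : G} (hg : g ∈ H) :
    Function.extend Subtype.val χ 0 g = χ ⟨g, hg⟩ :=
  Subtype.val_injective.extend_apply χ 0 ⟨g, hg⟩

lemma extend_val_of_notMem (χ : H → ℂ) {g : G} (hg : g ∉ H) :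
    Function.extend Subtype.val χ 0 g = 0 := by
  refine Function.extend_apply' χ (0 : G → ℂ) g ?_
  rintro ⟨y, rfl⟩
  exact hg y.2

lemma indChar_eq_sum_extend [Fintype G] (χ : H → ℂ) (g : G) :
    indChar H χ g =
      (Nat.card H : ℂ)⁻¹ * ∑ x : G, Function.extend Subtype.val χ 0 (x⁻¹ * g * x) := by
  rw [indChar]
  congr 1
  refine Finset.sum_congr (Finset.ext fun x => by simp) fun x _ => ?_
  split_ifs with h
  · exact (extend_val_of_mem χ h).symm
  · exact (extend_val_of_notMem χ h).symm

lemma indChar_eq_of_mem_normalizer [Finite G] {χ χ' : H → ℂ} {d : G}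
    (hd : d ∈ Subgroup.normalizer (H : Set G))
    (hχ : ∀ y y' : H, (y' : G) = d⁻¹ * y * d → χ y = χ' y') (g : G) :
    indChar H χ g = indChar H χ' g := by
  cases nonempty_fintype G
  have hd' := Subgroup.mem_normalizer_iff''.1 hd
  have hext (z : G) : Function.extend Subtype.val χ 0 z =
      Function.extend Subtype.val χ' 0 (d⁻¹ * z * d) := by
    by_cases hz : z ∈ H
    · rw [extend_val_of_mem χ hz, extend_val_of_mem χ' ((hd' z).1 hz)]
      exact hχ _ _ rfl
    · rw [extend_val_of_notMem χ hz, extend_val_of_notMem χ' (mt (hd' z).2 hz)]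
  rw [indChar_eq_sum_extend, indChar_eq_sum_extend]
  congr 1
  refine Fintype.sum_equiv (Equiv.mulRight d) _ _ fun x => ?_
  simp only [hext, Equiv.coe_mulRight, mul_inv_rev, mul_assoc]

end InducedCharacter

section Unipotent

variable {R : Type*} [CommRing R]

/-- The one-parameter subgroup `b ↦ [[1, b], [0, 1]]` of `PSL₂(R)`, bundled as an additive
character in the same way as `Matrix.GeneralLinearGroup.upperRightHom`. -/
def upperUnipotent (R : Type*) [CommRing R] : AddChar R PSL(2, R) where
  toFun b := (transvection zero_ne_one b : SL(2, R))
  map_zero_eq_one' := by rw [transvection_coeff_zero]; rfl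
  map_add_eq_mul' a b := by rw [transvection_add]; rfl

lemma upperUnipotent_apply (b : R) :
    upperUnipotent R b = ((transvection zero_ne_one b : SL(2, R)) : PSL(2, R)) :=
  rfl

/-- The subgroup `U` of `PSL₂(R)` consisting of the classes of upper unitriangular matrices. -/
def upperUnipotentSubgroup (R : Type*) [CommRing R] : Subgroup PSL(2, R) :=
  (upperUnipotent R).toMonoidHom.range

lemma mem_upperUnipotentSubgroup {g : PSL(2, R)} :
    g ∈ upperUnipotentSubgroup R ↔ ∃ b, upperUnipotent R b = g :=
  Iff.rfl

lemma upperUnipotent_mem (b : R) : upperUnipotent R b ∈ upperUnipotentSubgroup R :=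
  ⟨b, rfl⟩

lemma coe_transvection_zero_one (t : R) :
    ((transvection zero_ne_one t : SL(2, R)) : Matrix (Fin 2) (Fin 2) R) = !![1, t; 0, 1] := by
  ext r s
  fin_cases r <;> fin_cases s <;> simp [transvection_coe]

lemma inv_mul_transvection_mul {M : SL(2, R)} (hM : M 1 0 = 0) (t : R) :
    M⁻¹ * transvection zero_ne_one t * M = transvection zero_ne_one (t * M 1 1 ^ 2) := by
  have hdet : M 0 0 * M 1 1 = 1 := by
    simpa only [Matrix.det_fin_two, hM, mul_zero, sub_zero] using M.det_coe
  rw [mul_assoc, inv_mul_eq_iff_eq_mul]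
  ext r s
  fin_cases r <;> fin_cases s <;>
    simp only [Fin.zero_eta, Fin.mk_one, coe_mul, coe_transvection_zero_one, Matrix.mul_apply,
      Fin.sum_univ_two, Matrix.of_apply, Matrix.cons_val', Matrix.cons_val_fin_one,
      Matrix.cons_val_zero, Matrix.cons_val_one, hM, zero_mul, one_mul, mul_zero, mul_one,
      zero_add, add_zero]
  linear_combination (-t * M 1 1) * hdet

lemma inv_mul_transvection_mul_apply_one_zero (M : SL(2, R)) (t : R) :
    (M⁻¹ * transvection zero_ne_one t * M : SL(2, R)) 1 0 = -t * M 1 0 ^ 2 := by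
  simp only [coe_mul, coe_inv, Matrix.adjugate_fin_two, coe_transvection_zero_one,
    Matrix.mul_apply, Fin.sum_univ_two, Matrix.of_apply, Matrix.cons_val', Matrix.cons_val_fin_one,
    Matrix.cons_val_zero, Matrix.cons_val_one]
  ring

lemma inv_mul_upperUnipotent_mul {M : SL(2, R)} (hM : M 1 0 = 0) (t : R) :
    (M : PSL(2, R))⁻¹ * upperUnipotent R t * (M : PSL(2, R)) =
      upperUnipotent R (t * M 1 1 ^ 2) := by
  rw [upperUnipotent_apply (t * _), ← inv_mul_transvection_mul hM]
  rfl

lemma apply_one_zero_eq_zero_of_mem_upperUnipotentSubgroup {A : SL(2, R)}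
    (hA : (A : PSL(2, R)) ∈ upperUnipotentSubgroup R) : A 1 0 = 0 := by
  obtain ⟨b, hb⟩ := mem_upperUnipotentSubgroup.1 hA
  rw [upperUnipotent_apply, QuotientGroup.eq, mem_center_iff] at hb
  obtain ⟨r, -, hr⟩ := hb
  have hA' : (A : Matrix (Fin 2) (Fin 2) R) =
      (transvection zero_ne_one b : SL(2, R)) * Matrix.scalar (Fin 2) r := by
    rw [hr, ← coe_mul, mul_inv_cancel_left]
  simp [hA', coe_transvection_zero_one]

lemma inv_mul_upperUnipotent_mul_notMem [NoZeroDivisors R] {M : SL(2, R)}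
    (hM : M 1 0 ≠ 0) {t : R} (ht : t ≠ 0) :
    (M : PSL(2, R))⁻¹ * upperUnipotent R t * (M : PSL(2, R)) ∉ upperUnipotentSubgroup R := by
  intro h
  have hzero := apply_one_zero_eq_zero_of_mem_upperUnipotentSubgroup
    (A := M⁻¹ * transvection zero_ne_one t * M) h
  rw [inv_mul_transvection_mul_apply_one_zero] at hzero
  exact mul_ne_zero (neg_ne_zero.2 ht) (pow_ne_zero 2 hM) hzero

lemma coe_mem_normalizer_upperUnipotentSubgroup {M : SL(2, R)} (hM : M 1 0 = 0) :
    (M : PSL(2, R)) ∈ Subgroup.normalizer (upperUnipotentSubgroup R : Set PSL(2, R)) := by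
  have conj_mem {N : SL(2, R)} (hN : N 1 0 = 0) {g : PSL(2, R)}
      (hg : g ∈ upperUnipotentSubgroup R) :
      (N : PSL(2, R))⁻¹ * g * (N : PSL(2, R)) ∈ upperUnipotentSubgroup R := by
    obtain ⟨b, rfl⟩ := mem_upperUnipotentSubgroup.1 hg
    exact inv_mul_upperUnipotent_mul hN b ▸ upperUnipotent_mem _
  have hM' : M⁻¹ 1 0 = 0 := by simp [Matrix.adjugate_fin_two, hM]
  refine Subgroup.mem_normalizer_iff''.2 fun g => ⟨conj_mem hM, fun hg => ?_⟩
  simpa [mul_assoc] using conj_mem hM' hg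

end Unipotent

section FiniteField

variable {F : Type*} [Field F]

lemma isSquare_mul_iff_isSquare_iff_isSquare [Finite F] {i j : F} (hi : i ≠ 0) (hj : j ≠ 0) :
    IsSquare (i * j) ↔ (IsSquare i ↔ IsSquare j) := by
  classical
  cases nonempty_fintype F
  rw [← quadraticChar_one_iff_isSquare (mul_ne_zero hi hj), ← quadraticChar_one_iff_isSquare hi,
    ← quadraticChar_one_iff_isSquare hj, map_mul]
  rcases quadraticChar_dichotomy hi with h | h <;>
    rcases quadraticChar_dichotomy hj with h' | h' <;> simp [h, h']

lemma isSquare_mul_iff_exists_mul_sq_eq {i j : F} (hj : j ≠ 0) :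
    IsSquare (i * j) ↔ ∃ a, j * a ^ 2 = i := by
  constructor
  · rintro ⟨c, hc⟩
    refine ⟨c / j, ?_⟩
    field_simp
    linear_combination -hc
  · rintro ⟨a, rfl⟩
    exact ⟨j * a, by ring⟩

variable {χ χ' : upperUnipotentSubgroup F → ℂ} {ψ : AddChar F ℂ} {i j k : F}

lemma extend_upperUnipotent (hχ : ∀ b, χ ⟨upperUnipotent F b, upperUnipotent_mem b⟩ = ψ b)
    (b : F) : Function.extend Subtype.val χ 0 (upperUnipotent F b) = ψ b :=
  (extend_val_of_mem χ (upperUnipotent_mem b)).trans (hχ b)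

lemma indChar_eq_of_mul_sq_eq [Finite F] {a : F} (ha : a ≠ 0)
    (hχ : ∀ b, χ ⟨upperUnipotent F b, upperUnipotent_mem b⟩ = ψ (j * a ^ 2 * b))
    (hχ' : ∀ b, χ' ⟨upperUnipotent F b, upperUnipotent_mem b⟩ = ψ (j * b)) (g : PSL(2, F)) :
    indChar (upperUnipotentSubgroup F) χ g = indChar (upperUnipotentSubgroup F) χ' g := by
  let D : SL(2, F) := diag2 a⁻¹ (inv_ne_zero ha)
  have hD : D 1 0 = 0 := by simp [D, diag2_coe]
  have hDa : D 1 1 = a := by simp [D, diag2_coe]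
  refine indChar_eq_of_mem_normalizer (coe_mem_normalizer_upperUnipotentSubgroup hD) ?_ g
  rintro ⟨y, hyU⟩ y' hy
  obtain ⟨b, rfl⟩ := mem_upperUnipotentSubgroup.1 hyU
  obtain rfl : y' = ⟨upperUnipotent F (b * a ^ 2), upperUnipotent_mem _⟩ :=
    Subtype.ext (hy.trans (hDa ▸ inv_mul_upperUnipotent_mul hD b))
  refine (hχ b).trans (Eq.trans ?_ (hχ' _).symm)
  ring_nf

section Mackey

variable [Fintype F]

/-- The contribution of `x` to Mackey's formula for the pairing of `Ind_U^G χ` with the character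
`θ` of `U ≅ F`: the sum over `U ∩ x U x⁻¹` of the `x`-conjugate of `χ` times the conjugate
of `θ`. -/
noncomputable def mackeyTerm (χ : upperUnipotentSubgroup F → ℂ) (θ : AddChar F ℂ)
    (x : PSL(2, F)) : ℂ :=
  ∑ b, Function.extend Subtype.val χ 0 (x⁻¹ * upperUnipotent F b * x) * θ (-b)

lemma sum_indChar_mul_eq_sum_mackeyTerm [Fintype PSL(2, F)] (χ : upperUnipotentSubgroup F → ℂ)
    (θ : AddChar F ℂ) :
    ∑ b, indChar (upperUnipotentSubgroup F) χ (upperUnipotent F b) * θ (-b) =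
      (Nat.card (upperUnipotentSubgroup F) : ℂ)⁻¹ * ∑ x, mackeyTerm χ θ x := by
  simp only [indChar_eq_sum_extend, mackeyTerm, mul_assoc, ← Finset.mul_sum, Finset.sum_mul]
  rw [Finset.sum_comm]

lemma mackeyTerm_of_apply_one_zero_ne_zero
    (hχ : ∀ b, χ ⟨upperUnipotent F b, upperUnipotent_mem b⟩ = ψ b)
    (θ : AddChar F ℂ) {M : SL(2, F)} (hM : M 1 0 ≠ 0) : mackeyTerm χ θ M = 1 := by
  have hone : Function.extend Subtype.val χ 0 (1 : PSL(2, F)) = 1 := by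
    simpa only [AddChar.map_zero_eq_one] using extend_upperUnipotent hχ 0
  rw [mackeyTerm, Fintype.sum_eq_single 0]
  · simp [hone]
  · intro b hb
    have hnotMem := inv_mul_upperUnipotent_mul_notMem hM hb
    rw [extend_val_of_notMem χ hnotMem, zero_mul]

lemma mackeyTerm_of_apply_one_zero_eq_zero [DecidableEq F] (hψ : ψ.IsPrimitive)
    (hχ : ∀ b, χ ⟨upperUnipotent F b, upperUnipotent_mem b⟩ = ψ (k * b))
    (i : F) {M : SL(2, F)} (hM : M 1 0 = 0) :
    mackeyTerm χ (ψ.mulShift i) M = if k * M 1 1 ^ 2 = i then (Fintype.card F : ℂ) else 0 := by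
  have hext := extend_upperUnipotent (ψ := ψ.mulShift k) hχ
  calc mackeyTerm χ (ψ.mulShift i) M = ∑ b, ψ (b * (k * M 1 1 ^ 2 - i)) := by
        refine Finset.sum_congr rfl fun b _ => ?_
        rw [inv_mul_upperUnipotent_mul hM, hext, AddChar.mulShift_apply, AddChar.mulShift_apply,
          ← AddChar.map_add_eq_mul]
        ring_nf
    _ = if k * M 1 1 ^ 2 = i then (Fintype.card F : ℂ) else 0 := by
        rw [AddChar.sum_mulShift _ hψ]
        simp only [sub_eq_zero, Nat.cast_ite, Nat.cast_zero]

end Mackey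

open scoped ComplexOrder in
lemma exists_mul_sq_eq_of_indChar_eq [Finite F] (hψ : ψ.IsPrimitive)
    (hχ : ∀ b, χ ⟨upperUnipotent F b, upperUnipotent_mem b⟩ = ψ (i * b))
    (hχ' : ∀ b, χ' ⟨upperUnipotent F b, upperUnipotent_mem b⟩ = ψ (j * b))
    (h : ∀ g, indChar (upperUnipotentSubgroup F) χ g = indChar (upperUnipotentSubgroup F) χ' g) :
    ∃ a, j * a ^ 2 = i := by
  classical
  cases nonempty_fintype F
  cases nonempty_fintype PSL(2, F)
  by_contra! hne
  have hsum : ∑ x, mackeyTerm χ' (ψ.mulShift i) x = ∑ x, mackeyTerm χ (ψ.mulShift i) x := by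
    have hcard : (Nat.card (upperUnipotentSubgroup F) : ℂ)⁻¹ ≠ 0 :=
      inv_ne_zero (Nat.cast_ne_zero.2 Nat.card_pos.ne')
    rw [← mul_right_inj' hcard, ← sum_indChar_mul_eq_sum_mackeyTerm,
      ← sum_indChar_mul_eq_sum_mackeyTerm]
    simp only [h]
  have hle (x : PSL(2, F)) : mackeyTerm χ' (ψ.mulShift i) x ≤ mackeyTerm χ (ψ.mulShift i) x := by
    induction x using QuotientGroup.induction_on with | H M => ?_
    by_cases hM : M 1 0 = 0
    · rw [mackeyTerm_of_apply_one_zero_eq_zero hψ hχ i hM,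
        mackeyTerm_of_apply_one_zero_eq_zero hψ hχ' i hM, if_neg (hne _)]
      split_ifs <;> simp
    · rw [mackeyTerm_of_apply_one_zero_ne_zero (ψ := ψ.mulShift i) hχ _ hM,
        mackeyTerm_of_apply_one_zero_ne_zero (ψ := ψ.mulShift j) hχ' _ hM]
  have hlt : mackeyTerm χ' (ψ.mulShift i) (1 : SL(2, F)) <
      mackeyTerm χ (ψ.mulShift i) (1 : SL(2, F)) := by
    rw [mackeyTerm_of_apply_one_zero_eq_zero hψ hχ i (by simp),
      mackeyTerm_of_apply_one_zero_eq_zero hψ hχ' i (by simp), if_neg (hne _), if_pos (by simp)]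
    exact Nat.cast_pos.2 Fintype.card_pos
  exact (Finset.sum_lt_sum (fun x _ => hle x) ⟨_, Finset.mem_univ _, hlt⟩).ne hsum

end FiniteField

theorem stmt16_general {F : Type*} [Field F] [Finite F] {ψ : AddChar F ℂ} (hψ : ψ.IsPrimitive)
    {i j : F} (hi : i ≠ 0) (hj : j ≠ 0) {χi χj : upperUnipotentSubgroup F → ℂ}
    (hχi : ∀ b, χi ⟨upperUnipotent F b, upperUnipotent_mem b⟩ = ψ (i * b))
    (hχj : ∀ b, χj ⟨upperUnipotent F b, upperUnipotent_mem b⟩ = ψ (j * b)) :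
    (∀ g, indChar (upperUnipotentSubgroup F) χi g = indChar (upperUnipotentSubgroup F) χj g) ↔
      (IsSquare i ↔ IsSquare j) := by
  rw [← isSquare_mul_iff_isSquare_iff_isSquare hi hj, isSquare_mul_iff_exists_mul_sq_eq hj]
  refine ⟨exists_mul_sq_eq_of_indChar_eq hψ hχi hχj, ?_⟩
  rintro ⟨a, rfl⟩
  have ha : a ≠ 0 := by rintro rfl; simp at hi
  exact indChar_eq_of_mul_sq_eq ha hχi hχj

section PrimeField

lemma upperUnipotent_one (p : ℕ) : upperUnipotent (ZMod p) 1 = uGen p :=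
  congrArg QuotientGroup.mk (Subtype.ext (coe_transvection_zero_one 1))

lemma uGen_zpow (p : ℕ) (n : ℤ) : uGen p ^ n = upperUnipotent (ZMod p) n := by
  rw [← upperUnipotent_one, ← AddChar.map_zsmul_eq_zpow, zsmul_one]

lemma zpowers_uGen (p : ℕ) : Subgroup.zpowers (uGen p) = upperUnipotentSubgroup (ZMod p) := by
  ext g
  simp only [Subgroup.mem_zpowers_iff, uGen_zpow, mem_upperUnipotentSubgroup,
    ZMod.intCast_surjective.exists]

lemma eq_stdAddChar_of_forall_eq_uGen_pow {p : ℕ} [NeZero p]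
    {χ : upperUnipotentSubgroup (ZMod p) → ℂ} {k : ZMod p}
    (hχ : ∀ (x : upperUnipotentSubgroup (ZMod p)) (n : ℕ), (x : PSL p) = uGen p ^ n →
      χ x = Complex.exp (2 * Real.pi * Complex.I * (k.val * n) / p)) (b : ZMod p) :
    χ ⟨upperUnipotent (ZMod p) b, upperUnipotent_mem b⟩ = ZMod.stdAddChar (k * b) := by
  have hpow : upperUnipotent (ZMod p) b = uGen p ^ b.val := by
    rw [← zpow_natCast, uGen_zpow, Int.cast_natCast, ZMod.natCast_zmod_val]
  have hexp := ZMod.stdAddChar_coe (N := p) ((k.val * b.val : ℕ) : ℤ)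
  push_cast [ZMod.natCast_zmod_val] at hexp
  rw [hχ _ _ hpow, hexp]

end PrimeField

theorem stmt16 (p : ℕ) [Fact p.Prime] (hp : Odd p) (i j : ZMod p) (hi : i ≠ 0) (hj : j ≠ 0)
    (hij : i ≠ j) (U : Subgroup (PSL p)) (hU : U = Subgroup.zpowers (uGen p))
    (χi χj : ↥U → ℂ)
    (hχi : ∀ (x : ↥U) (n : ℕ), (x : PSL p) = uGen p ^ n →
      χi x = Complex.exp (2 * Real.pi * Complex.I * (i.val * n) / p))
    (hχj : ∀ (x : ↥U) (n : ℕ), (x : PSL p) = uGen p ^ n →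
      χj x = Complex.exp (2 * Real.pi * Complex.I * (j.val * n) / p)) :
    (∀ g : PSL p, indChar U χi g = indChar U χj g) ↔ (IsSquare i ↔ IsSquare j) := by
  obtain rfl : U = upperUnipotentSubgroup (ZMod p) := hU.trans (zpowers_uGen p)
  exact stmt16_general (ZMod.isPrimitive_stdAddChar p) hi hj
    (eq_stdAddChar_of_forall_eq_uGen_pow hχi) (eq_stdAddChar_of_forall_eq_uGen_pow hχj)
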